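/- arXiv:2508.14091 — 5 statements merged into one kernel-verified Lean document; each statement's English description precedes it below -/
import Mathlib

section
/- For every d ≥ 1 and every vector r ∈ ℝ^d, the TransE scoring function f(h, t) = −‖h + r − t‖₂ is not monotonically increasing: there exist vectors h, h', t, t' ∈ ℝ^d with 0 ≤ h[i] ≤ h'[i] and 0 ≤ t[i] ≤ t'[i] for every index i such that f(h, t) > f(h', t'). -/
open scoped ENNReal

theorem exists_translation_score_lt {G α : Type*} [AddCommGroup G] [Lattice G] [AddLeftMono G]
    [LT α] {score : G → α} {u : G} (hu : 0 ≤ u) (hscore : score u < score 0) (r : G) :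
    ∃ h h' t t' : G, (0 ≤ h ∧ h ≤ h') ∧ (0 ≤ t ∧ t ≤ t') ∧
      score (h' + r - t') < score (h + r - t) := by
  -- Since `r = r⁺ - r⁻`, translation by `r` carries `r⁻` exactly onto `r⁺`.
  refine ⟨r⁻, r⁻ + u, r⁺, r⁺, ⟨negPart_nonneg r, le_add_of_nonneg_right hu⟩,
    ⟨posPart_nonneg r, le_rfl⟩, ?_⟩
  have error_zero : r⁻ + r - r⁺ = 0 := by
    rw [add_sub_right_comm, negPart_sub_posPart, neg_add_cancel]
  have error_shifted : r⁻ + u + r - r⁺ = u := by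
    rw [add_right_comm, add_sub_right_comm, error_zero, zero_add]
  rwa [error_zero, error_shifted]

theorem transE_not_monotonically_increasing_general {ι : Type*} [Fintype ι] [Nonempty ι]
    (p : ℝ≥0∞) [Fact (1 ≤ p)] (r : PiLp p fun _ : ι ↦ ℝ) :
    ∃ h h' t t' : PiLp p fun _ : ι ↦ ℝ,
      (∀ i, 0 ≤ h i ∧ h i ≤ h' i) ∧
      (∀ i, 0 ≤ t i ∧ t i ≤ t' i) ∧
      -‖h + r - t‖ > -‖h' + r - t'‖ := by
  let score (x : ι → ℝ) : ℝ := -‖WithLp.toLp p x‖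
  have score_one_lt : score 1 < score 0 := by simp [score]
  obtain ⟨h, h', t, t', ⟨h_nonneg, h_le⟩, ⟨t_nonneg, t_le⟩, score_lt⟩ :=
    exists_translation_score_lt zero_le_one score_one_lt r.ofLp
  exact ⟨.toLp p h, .toLp p h', .toLp p t, .toLp p t',
    fun i ↦ ⟨h_nonneg i, h_le i⟩, fun i ↦ ⟨t_nonneg i, t_le i⟩, score_lt⟩

/-- For every `d ≥ 1` and every `r ∈ ℝ^d`, the TransE scoring function
`f(h, t) = -‖h + r - t‖₂` is not monotonically increasing. -/
theorem transE_not_monotonically_increasing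
    (d : ℕ) (hd : 1 ≤ d) (r : EuclideanSpace ℝ (Fin d)) :
    ∃ h h' t t' : EuclideanSpace ℝ (Fin d),
      (∀ i, 0 ≤ h i ∧ h i ≤ h' i) ∧
      (∀ i, 0 ≤ t i ∧ t i ≤ t' i) ∧
      -‖h + r - t‖ > -‖h' + r - t'‖ :=
  have : Nonempty (Fin d) := Fin.pos_iff_nonempty.mp hd
  transE_not_monotonically_increasing_general 2 r
end

section
/- Let d and k be natural numbers, let M¹, M², M³ be k×d real matrices and w ∈ ℝ^k and r ∈ ℝ^d be vectors, all with non-negative entries, and let σ : ℝ → ℝ be monotonically increasing with non-negative range. Then the MLP scoring function f(h, t) = wᵀ σ(M¹ h + M² r + M³ t), with σ applied componentwise, is monotonically increasing: for all vectors h, h', t, t' ∈ ℝ^d with 0 ≤ h[i] ≤ h'[i] and 0 ≤ t[i] ≤ t'[i] for every index i, one has f(h, t) ≤ f(h', t'). -/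
section

open scoped Matrix

variable {m n p q R S : Type*}
  [Semiring R] [PartialOrder R] [IsOrderedRing R]
  [Semiring S] [PartialOrder S] [IsOrderedRing S]

theorem monotone_mulVec_of_nonneg [Fintype n] {M : Matrix m n R} (hM : ∀ i j, 0 ≤ M i j) :
    Monotone (M *ᵥ ·) :=
  fun _ _ huv i ↦ dotProduct_le_dotProduct_of_nonneg_left huv (hM i)

theorem mlp_monotonically_increasing_general [Fintype m] [Fintype n] [Fintype p] [Fintype q]
    {M₁ : Matrix m n R} (M₂ : Matrix m p R) {M₃ : Matrix m q R} {w : m → S} (r : p → R)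
    (hM₁ : ∀ i j, 0 ≤ M₁ i j) (hM₃ : ∀ i j, 0 ≤ M₃ i j) (hw : 0 ≤ w)
    {σ : R → S} (hσ : Monotone σ) :
    Monotone fun x : (n → R) × (q → R) ↦ w ⬝ᵥ (σ ∘ (M₁ *ᵥ x.1 + M₂ *ᵥ r + M₃ *ᵥ x.2)) := by
  intro x y hxy
  have preactivation_le :
      M₁ *ᵥ x.1 + M₂ *ᵥ r + M₃ *ᵥ x.2 ≤ M₁ *ᵥ y.1 + M₂ *ᵥ r + M₃ *ᵥ y.2 :=
    add_le_add (add_le_add_left (monotone_mulVec_of_nonneg hM₁ hxy.1) _)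
      (monotone_mulVec_of_nonneg hM₃ hxy.2)
  exact dotProduct_le_dotProduct_of_nonneg_left (fun i ↦ hσ (preactivation_le i)) hw

end

/-- The MLP scoring function `f(h, t) = wᵀ σ(M¹ h + M² r + M³ t)`,
with all parameters non-negative and `σ` monotonically increasing with
non-negative range, is monotonically increasing. -/
theorem mlp_monotonically_increasing
    (d k : ℕ) (M1 M2 M3 : Matrix (Fin k) (Fin d) ℝ)
    (w : Fin k → ℝ) (r : Fin d → ℝ)
    (hM1 : ∀ i j, 0 ≤ M1 i j) (hM2 : ∀ i j, 0 ≤ M2 i j) (hM3 : ∀ i j, 0 ≤ M3 i j)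
    (hw : ∀ i, 0 ≤ w i) (hr : ∀ i, 0 ≤ r i)
    (σ : ℝ → ℝ) (hσ : Monotone σ) (hσ0 : ∀ x, 0 ≤ σ x)
    (h h' t t' : Fin d → ℝ)
    (hh : ∀ i, 0 ≤ h i ∧ h i ≤ h' i)
    (ht : ∀ i, 0 ≤ t i ∧ t i ≤ t' i) :
    ∑ m, w m * σ (M1.mulVec h m + M2.mulVec r m + M3.mulVec t m)
      ≤ ∑ m, w m * σ (M1.mulVec h' m + M2.mulVec r m + M3.mulVec t' m) :=
  mlp_monotonically_increasing_general M2 r hM1 hM3 hw hσ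
    (show (h, t) ≤ (h', t') from ⟨fun i ↦ (hh i).2, fun i ↦ (ht i).2⟩)
end

section
/- Let d and k be natural numbers, let T : Fin k × Fin d × Fin d → ℝ be a third-order tensor, let M¹, M² be k×d real matrices, let r, b ∈ ℝ^k be vectors, all with non-negative entries, and let σ : ℝ → ℝ be monotonically increasing with non-negative range. Then the NTN scoring function f(h, t) = Σ_{m=1}^{k} r[m] · σ( Σ_{i,j} T[m, i, j]·h[i]·t[j] + (M¹ h)[m] + (M² t)[m] + b[m] ) is monotonically increasing: for all vectors h, h', t, t' ∈ ℝ^d with 0 ≤ h[i] ≤ h'[i] and 0 ≤ t[i] ≤ t'[i] for every index i, one has f(h, t) ≤ f(h', t'). -/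
section NeuralTensorNetwork

open Finset Matrix Set

variable {ι κ ν R : Type*} [Fintype ι] [Fintype κ] [Semiring R]

/-- The argument `hᵀ T t + M₁ h + M₂ t + b` of the activation function in a neural tensor network.
Heads `h` and tails `t` may have different index types; `R` need not be commutative, and the
coefficients `T m i j` are placed on the left. -/
def ntnPreactivation (T : ν → ι → κ → R) (M₁ : Matrix ν ι R) (M₂ : Matrix ν κ R) (b : ν → R)
    (h : ι → R) (t : κ → R) (m : ν) : R :=
  (∑ i, ∑ j, T m i j * h i * t j) + (M₁ *ᵥ h) m + (M₂ *ᵥ t) m + b m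

/-- The scoring function `rᵀ σ(hᵀ T t + M₁ h + M₂ t + b)` of a neural tensor network, with the
activation function `σ` applied componentwise. -/
def ntnScore [Fintype ν] (T : ν → ι → κ → R) (M₁ : Matrix ν ι R) (M₂ : Matrix ν κ R)
    (r b : ν → R) (σ : R → R) (h : ι → R) (t : κ → R) : R :=
  ∑ m, r m * σ (ntnPreactivation T M₁ M₂ b h t m)

variable [PartialOrder R] [IsOrderedRing R]

theorem monotone_mulVec_of_nonneg_s8 {A : Matrix ν ι R} (hA : ∀ m i, 0 ≤ A m i) :
    Monotone (A *ᵥ ·) :=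
  fun _ _ hxy m ↦ dotProduct_le_dotProduct_of_nonneg_left hxy (hA m)

theorem monotoneOn_sum_sum_mul_mul_of_nonneg {A : ι → κ → R} (hA : ∀ i j, 0 ≤ A i j) :
    MonotoneOn (fun p : (ι → R) × (κ → R) ↦ ∑ i, ∑ j, A i j * p.1 i * p.2 j) (Ici 0) := by
  rintro ⟨x, y⟩ ⟨-, hy⟩ ⟨x', y'⟩ ⟨hx', -⟩ ⟨hxx', hyy'⟩
  refine sum_le_sum fun i _ ↦ sum_le_sum fun j _ ↦ ?_
  have hAx : A i j * x i ≤ A i j * x' i := mul_le_mul_of_nonneg_left (hxx' i) (hA i j)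
  have hAx' : 0 ≤ A i j * x' i := mul_nonneg (hA i j) (hx' i)
  exact mul_le_mul hAx (hyy' j) (hy j) hAx'

variable {T : ν → ι → κ → R} {M₁ : Matrix ν ι R} {M₂ : Matrix ν κ R}

theorem monotoneOn_ntnPreactivation (hT : ∀ m i j, 0 ≤ T m i j) (hM₁ : ∀ m i, 0 ≤ M₁ m i)
    (hM₂ : ∀ m j, 0 ≤ M₂ m j) (b : ν → R) (m : ν) :
    MonotoneOn (fun p : (ι → R) × (κ → R) ↦ ntnPreactivation T M₁ M₂ b p.1 p.2 m) (Ici 0) := by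
  intro p hp q hq hpq
  have bilinear_le := monotoneOn_sum_sum_mul_mul_of_nonneg (hT m) hp hq hpq
  have head_le := monotone_mulVec_of_nonneg_s8 hM₁ hpq.1 m
  have tail_le := monotone_mulVec_of_nonneg_s8 hM₂ hpq.2 m
  exact add_le_add (add_le_add (add_le_add bilinear_le head_le) tail_le) le_rfl

theorem ntn_monotonically_increasing_general [Fintype ν] (hT : ∀ m i j, 0 ≤ T m i j)
    (hM₁ : ∀ m i, 0 ≤ M₁ m i) (hM₂ : ∀ m j, 0 ≤ M₂ m j) {r : ν → R} (hr : ∀ m, 0 ≤ r m)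
    (b : ν → R) {σ : R → R} (hσ : Monotone σ) :
    MonotoneOn (fun p : (ι → R) × (κ → R) ↦ ntnScore T M₁ M₂ r b σ p.1 p.2) (Ici 0) :=
  fun _ hp _ hq hpq ↦ sum_le_sum fun m _ ↦
    mul_le_mul_of_nonneg_left (hσ (monotoneOn_ntnPreactivation hT hM₁ hM₂ b m hp hq hpq)) (hr m)

end NeuralTensorNetwork

/-- The NTN scoring function
`f(h, t) = rᵀ σ(hᵀ T t + M¹ h + M² t + b)`, with all parameters non-negative
and `σ` monotonically increasing with non-negative range, is monotonically
increasing. -/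
theorem ntn_monotonically_increasing
    (d k : ℕ) (T : Fin k → Fin d → Fin d → ℝ)
    (M1 M2 : Matrix (Fin k) (Fin d) ℝ) (r b : Fin k → ℝ)
    (hT : ∀ m i j, 0 ≤ T m i j)
    (hM1 : ∀ i j, 0 ≤ M1 i j) (hM2 : ∀ i j, 0 ≤ M2 i j)
    (hr : ∀ m, 0 ≤ r m) (hb : ∀ m, 0 ≤ b m)
    (σ : ℝ → ℝ) (hσ : Monotone σ) (hσ0 : ∀ x, 0 ≤ σ x)
    (h h' t t' : Fin d → ℝ)
    (hh : ∀ i, 0 ≤ h i ∧ h i ≤ h' i)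
    (ht : ∀ i, 0 ≤ t i ∧ t i ≤ t' i) :
    ∑ m, r m * σ ((∑ i, ∑ j, T m i j * h i * t j) + M1.mulVec h m + M2.mulVec t m + b m)
      ≤ ∑ m, r m * σ ((∑ i, ∑ j, T m i j * h' i * t' j) + M1.mulVec h' m + M2.mulVec t' m + b m) := by
  have nonneg : 0 ≤ (h, t) := ⟨fun i ↦ (hh i).1, fun i ↦ (ht i).1⟩
  have le : (h, t) ≤ (h', t') := ⟨fun i ↦ (hh i).2, fun i ↦ (ht i).2⟩
  simpa only [ntnScore, ntnPreactivation] using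
    ntn_monotonically_increasing_general hT hM1 hM2 hr b hσ nonneg (nonneg.trans le) le
end

section
/- Let N be a monotonic max-sum GNN with L layers over a finite colour set Col and dimensions δ_0, …, δ_L. Let G and G' be finite Col-edge-coloured graphs with vertex sets V and V', decidable edge relations E^c ⊆ V × V and E'^c ⊆ V' × V' for each c ∈ Col, and initial labels λ_0 : V → ℝ^{δ_0} and λ'_0 : V' → ℝ^{δ_0} whose entries are all non-negative. Suppose ι : V → V' is an injective map such that for all c ∈ Col and u, v ∈ V, (u, v) ∈ E^c implies (ι u, ι v) ∈ E'^c, and λ_0(v)[j] ≤ λ'_0(ι v)[j] for all v ∈ V and all j. Then for every layer 0 ≤ ℓ ≤ L, every vertex v ∈ V and every index j ∈ {1, …, δ_ℓ}, the labels computed by N satisfy λ_ℓ(v)[j] ≤ λ'_ℓ(ι v)[j]. -/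
/-- Sum of the `min k |S|` largest elements of the multiset `S`. -/
noncomputable def maxKSum (k : ℕ) (S : Multiset ℝ) : ℝ :=
  ((S.sort (· ≤ ·)).reverse.take k).sum

/-- `max-k-sum` where the aggregation parameter `k` may be a natural number or `∞`;
`max-∞-sum` sums all elements. -/
noncomputable def maxKSumE (k : ℕ∞) (S : Multiset ℝ) : ℝ :=
  maxKSum (min k (Multiset.card S : ℕ∞)).toNat S

/-- A max-sum GNN with `L` layers over a colour set `Col` and dimensions `δ 0, …, δ L`:
matrices `A ℓ`, `B ℓ c ∈ ℝ^{δ(ℓ+1) × δ ℓ}`, bias vectors `bias ℓ ∈ ℝ^{δ(ℓ+1)}`,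
activation functions `act ℓ : ℝ → ℝ` and aggregation parameters `agg ℓ ∈ ℕ ∪ {∞}`. -/
structure MaxSumGNN (Col : Type) (L : ℕ) (δ : ℕ → ℕ) where
  A : ∀ ℓ : Fin L, Matrix (Fin (δ (ℓ.1 + 1))) (Fin (δ ℓ.1)) ℝ
  B : ∀ ℓ : Fin L, Col → Matrix (Fin (δ (ℓ.1 + 1))) (Fin (δ ℓ.1)) ℝ
  bias : ∀ ℓ : Fin L, Fin (δ (ℓ.1 + 1)) → ℝ
  act : Fin L → ℝ → ℝ
  agg : Fin L → ℕ∞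

/-- A max-sum GNN is monotonic if all entries of all matrices `A ℓ`, `B ℓ c` are
non-negative and every activation function is monotonically increasing with
non-negative range. -/
def MaxSumGNN.Monotonic {Col : Type} {L : ℕ} {δ : ℕ → ℕ} (N : MaxSumGNN Col L δ) : Prop :=
  (∀ ℓ i j, 0 ≤ N.A ℓ i j) ∧ (∀ ℓ c i j, 0 ≤ N.B ℓ c i j) ∧
  (∀ ℓ, Monotone (N.act ℓ) ∧ ∀ x, 0 ≤ N.act ℓ x)

/-- The vertex labels `λ_ℓ(v)` computed by a max-sum GNN applied to a finite
`Col`-edge-coloured graph with edge relations `E c` and initial labels `lam0`: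
`λ_ℓ(v) = σ_ℓ(b_ℓ + A_ℓ λ_{ℓ-1}(v) + Σ_c B_ℓ^c a_ℓ^c(v))` where the `j`-th
component of `a_ℓ^c(v)` is the `max-k_ℓ-sum` of `⦃λ_{ℓ-1}(u)[j] : (v,u) ∈ E^c⦄`. -/
noncomputable def MaxSumGNN.label {Col : Type} [Fintype Col] {L : ℕ} {δ : ℕ → ℕ}
    (N : MaxSumGNN Col L δ) {V : Type} [Fintype V]
    (E : Col → V → V → Prop) [∀ c u v, Decidable (E c u v)]
    (lam0 : V → Fin (δ 0) → ℝ) :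
    (ℓ : ℕ) → ℓ ≤ L → V → Fin (δ ℓ) → ℝ
  | 0, _, v => lam0 v
  | (ℓ + 1), hℓ, v => fun i =>
      N.act ⟨ℓ, hℓ⟩ (N.bias ⟨ℓ, hℓ⟩ i
        + (N.A ⟨ℓ, hℓ⟩).mulVec (N.label E lam0 ℓ (Nat.le_of_succ_le hℓ) v) i
        + ∑ c : Col, (N.B ⟨ℓ, hℓ⟩ c).mulVec
            (fun j => maxKSumE (N.agg ⟨ℓ, hℓ⟩)
              ((Finset.univ.filter (fun u => E c v u)).val.map
                (fun u => N.label E lam0 ℓ (Nat.le_of_succ_le hℓ) u j))) i)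

/-!
For a multiset `T` of non-negative numbers, `max-k-sum` of `T` is the largest sum of a submultiset
of `T` with at most `k` elements. If `ι` is a homomorphism that is injective on the neighbourhood
of `v`, then the neighbours of `v` selected by `max-k-sum` are carried to as many neighbours of
`ι v` with labels at least as large, so the aggregate at `v` is at most that at `ι v`. Non-negative
matrices and monotone activations preserve this inequality from each layer to the next, and the
non-negative range of the activations keeps the labels non-negative.
-/

theorem sublistForall₂_take_of_sublist {α : Type*} [Preorder α] {l m : List α} {k : ℕ}
    (hl : l.Pairwise (· ≥ ·)) (hml : m.Sublist l) (hmk : m.length ≤ k) :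
    List.SublistForall₂ (· ≤ ·) m (l.take k) := by
  induction l generalizing m k with
  | nil =>
    rw [List.sublist_nil.1 hml]
    exact .nil
  | cons a l ih =>
    obtain ⟨ha, hl⟩ := List.pairwise_cons.1 hl
    match m, k with
    | [], _ => exact .nil
    | b :: m, k + 1 =>
      have hba : b ≤ a := by
        rcases List.mem_cons.1 (hml.subset List.mem_cons_self) with rfl | hbl
        · exact le_rfl
        · exact ha b hbl
      exact .cons hba (ih hl hml.tail (Nat.le_of_succ_le_succ hmk))

section MaxKSum

variable {k : ℕ∞} {M S S' T : Multiset ℝ}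

theorem exists_le_sum_eq_maxKSumE (k : ℕ∞) (S : Multiset ℝ) :
    ∃ M ≤ S, (M.card : ℕ∞) ≤ k ∧ M.sum = maxKSumE k S := by
  set n := (min k (S.card : ℕ∞)).toNat
  have hnk : (n : ℕ∞) ≤ k := (ENat.natCast_toNat_le_self _).trans (min_le_left _ _)
  refine ⟨((S.sort (· ≤ ·)).reverse.take n : List ℝ), ?_, ?_, Multiset.sum_coe _⟩
  · calc (((S.sort (· ≤ ·)).reverse.take n : List ℝ) : Multiset ℝ)
        ≤ ((S.sort (· ≤ ·)).reverse : List ℝ) := (List.take_sublist _ _).subperm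
      _ = S := by rw [Multiset.coe_reverse, Multiset.sort_eq]
  · exact (Nat.cast_le.2 (List.length_take_le _ _)).trans hnk

theorem sum_le_maxKSum {k : ℕ} (hT : ∀ x ∈ T, 0 ≤ x) (hMT : M ≤ T) (hMk : M.card ≤ k) :
    M.sum ≤ maxKSum k T := by
  have hanti : (T.sort (· ≤ ·)).reverse.Pairwise (· ≥ ·) :=
    List.pairwise_reverse.2 (Multiset.pairwise_sort T (· ≤ ·))
  have hsort : ((T.sort (· ≤ ·)).reverse : Multiset ℝ) = T := by
    rw [Multiset.coe_reverse, Multiset.sort_eq]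
  obtain ⟨m, rfl⟩ := Quot.exists_rep M
  obtain ⟨m', hperm, hsub⟩ : List.Subperm m (T.sort (· ≤ ·)).reverse :=
    Multiset.coe_le.1 (hMT.trans_eq hsort.symm)
  calc m.sum = m'.sum := hperm.sum_eq.symm
    _ ≤ ((T.sort (· ≤ ·)).reverse.take k).sum := by
      refine (sublistForall₂_take_of_sublist hanti hsub ?_).sum_le_sum fun x hx => hT x ?_
      · exact hperm.length_eq.trans_le hMk
      · exact (Multiset.mem_sort _).1 (List.mem_reverse.1 (List.mem_of_mem_take hx))

theorem sum_le_maxKSumE (hT : ∀ x ∈ T, 0 ≤ x) (hMT : M ≤ T) (hMk : (M.card : ℕ∞) ≤ k) :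
    M.sum ≤ maxKSumE k T := by
  have hcard : (M.card : ℕ∞) ≤ min k T.card :=
    le_min hMk (Nat.cast_le.2 (Multiset.card_le_card hMT))
  have hfinite : min k (T.card : ℕ∞) ≠ ⊤ :=
    ne_top_of_le_ne_top (ENat.natCast_ne_top _) (min_le_right _ _)
  exact sum_le_maxKSum hT hMT (ENat.toNat_le_toNat hcard hfinite)

theorem maxKSumE_le_maxKSumE_of_rel (hSS' : S.Rel (· ≤ ·) S') (hS'T : S' ≤ T)
    (hT : ∀ x ∈ T, 0 ≤ x) : maxKSumE k S ≤ maxKSumE k T := by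
  obtain ⟨M, hMS, hMk, hMsum⟩ := exists_le_sum_eq_maxKSumE k S
  obtain ⟨R, rfl⟩ := Multiset.le_iff_exists_add.1 hMS
  obtain ⟨M', R', hMM', -, rfl⟩ := Multiset.rel_add_left.1 hSS'
  have hM'k : (M'.card : ℕ∞) ≤ k := Multiset.card_eq_card_of_rel hMM' ▸ hMk
  calc maxKSumE k (M + R) = M.sum := hMsum.symm
    _ ≤ M'.sum := Multiset.sum_le_sum_of_rel_le hMM'
    _ ≤ maxKSumE k T := sum_le_maxKSumE hT ((Multiset.le_add_right M' R').trans hS'T) hM'k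

theorem maxKSumE_map_le_maxKSumE_map {V V' : Type*} {s : Finset V} {s' : Finset V'} {ι : V → V'}
    {f : V → ℝ} {f' : V' → ℝ} (hinj : Set.InjOn ι s) (hmaps : Set.MapsTo ι s s')
    (hf : ∀ u ∈ s, f u ≤ f' (ι u)) (hf' : ∀ u ∈ s', 0 ≤ f' u) :
    maxKSumE k (s.val.map f) ≤ maxKSumE k (s'.val.map f') := by
  classical
  have hdominated : (s.val.map f).Rel (· ≤ ·) (s.val.map (f' ∘ ι)) :=
    Multiset.rel_map.2 (Multiset.rel_refl_of_refl_on hf)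
  have himage : s.val.map ι ≤ s'.val := by
    rw [← Finset.image_val_of_injOn hinj, Finset.val_le_iff]
    exact Finset.image_subset_iff.2 hmaps
  have hsub : s.val.map (f' ∘ ι) ≤ s'.val.map f' := by
    rw [← Multiset.map_map]
    exact Multiset.map_le_map himage
  exact maxKSumE_le_maxKSumE_of_rel hdominated hsub (by simpa using hf')

end MaxKSum

theorem mulVec_le_mulVec_of_nonneg {R m n : Type*} [Fintype n] [Semiring R] [PartialOrder R]
    [IsOrderedRing R] {A : Matrix m n R} (hA : ∀ i j, 0 ≤ A i j) {x y : n → R} (hxy : x ≤ y) :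
    A.mulVec x ≤ A.mulVec y :=
  fun i => dotProduct_le_dotProduct_of_nonneg_left hxy (hA i)

theorem MaxSumGNN.Monotonic.label_nonneg {Col : Type} [Fintype Col] {L : ℕ} {δ : ℕ → ℕ}
    {N : MaxSumGNN Col L δ} (hN : N.Monotonic) {V : Type} [Fintype V]
    (E : Col → V → V → Prop) [∀ c u v, Decidable (E c u v)]
    {lam0 : V → Fin (δ 0) → ℝ} (hlam0 : ∀ v j, 0 ≤ lam0 v j) :
    ∀ (ℓ : ℕ) (hℓ : ℓ ≤ L) (v : V) (j : Fin (δ ℓ)), 0 ≤ N.label E lam0 ℓ hℓ v j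
  | 0, _, v, j => hlam0 v j
  | ℓ + 1, hℓ, _, _ => (hN.2.2 ⟨ℓ, hℓ⟩).2 _

theorem maxSumGNN_label_monotone_general
    {Col : Type} [Fintype Col] {L : ℕ} {δ : ℕ → ℕ}
    (N : MaxSumGNN Col L δ) (hN : N.Monotonic)
    {V V' : Type} [Fintype V] [Fintype V']
    (E : Col → V → V → Prop) [∀ c u v, Decidable (E c u v)]
    (E' : Col → V' → V' → Prop) [∀ c u v, Decidable (E' c u v)]
    (lam0 : V → Fin (δ 0) → ℝ) (lam0' : V' → Fin (δ 0) → ℝ)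
    (hlam0' : ∀ v j, 0 ≤ lam0' v j)
    (ι : V → V') (hι : ∀ c v, Set.InjOn ι {u | E c v u})
    (hE : ∀ c u v, E c u v → E' c (ι u) (ι v))
    (hle : ∀ v j, lam0 v j ≤ lam0' (ι v) j) :
    ∀ (ℓ : ℕ) (hℓ : ℓ ≤ L) (v : V) (j : Fin (δ ℓ)),
      N.label E lam0 ℓ hℓ v j ≤ N.label E' lam0' ℓ hℓ (ι v) j := by
  have ⟨hA, hB, hact⟩ := hN
  intro ℓ
  induction ℓ with
  | zero => exact fun _ => hle
  | succ ℓ ih =>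
    intro hℓ v i
    have hℓ' : ℓ ≤ L := Nat.le_of_succ_le hℓ
    have haggregate (c : Col) (j : Fin (δ ℓ)) :
        maxKSumE (N.agg ⟨ℓ, hℓ⟩)
            ((Finset.univ.filter (E c v)).val.map fun u => N.label E lam0 ℓ hℓ' u j) ≤
          maxKSumE (N.agg ⟨ℓ, hℓ⟩)
            ((Finset.univ.filter (E' c (ι v))).val.map fun u => N.label E' lam0' ℓ hℓ' u j) :=
      maxKSumE_map_le_maxKSumE_map (by simpa using hι c v)
        (fun u hu => by simpa using hE c v u (by simpa using hu))
        (fun u _ => ih hℓ' u j) (fun u _ => hN.label_nonneg E' hlam0' ℓ hℓ' u j)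
    rw [MaxSumGNN.label, MaxSumGNN.label]
    refine (hact ⟨ℓ, hℓ⟩).1 (add_le_add (add_le_add_right ?_ _) (Finset.sum_le_sum fun c _ => ?_))
    · exact mulVec_le_mulVec_of_nonneg (hA ⟨ℓ, hℓ⟩) (ih hℓ' v) i
    · exact mulVec_le_mulVec_of_nonneg (hB ⟨ℓ, hℓ⟩ c) (haggregate c) i

/-- monotonicity of a monotonic max-sum GNN under injective
homomorphisms of edge-coloured graphs with non-negative, pointwise-dominated
initial labels: every computed label on `G` is dominated by the corresponding
label on `G'`. -/
theorem maxSumGNN_label_monotone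
    {Col : Type} [Fintype Col] {L : ℕ} {δ : ℕ → ℕ}
    (N : MaxSumGNN Col L δ) (hN : N.Monotonic)
    {V V' : Type} [Fintype V] [Fintype V']
    (E : Col → V → V → Prop) [∀ c u v, Decidable (E c u v)]
    (E' : Col → V' → V' → Prop) [∀ c u v, Decidable (E' c u v)]
    (lam0 : V → Fin (δ 0) → ℝ) (lam0' : V' → Fin (δ 0) → ℝ)
    (hlam0 : ∀ v j, 0 ≤ lam0 v j) (hlam0' : ∀ v j, 0 ≤ lam0' v j)
    (ι : V → V') (hι : Function.Injective ι)
    (hE : ∀ c u v, E c u v → E' c (ι u) (ι v))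
    (hle : ∀ v j, lam0 v j ≤ lam0' (ι v) j) :
    ∀ (ℓ : ℕ) (hℓ : ℓ ≤ L) (v : V) (j : Fin (δ ℓ)),
      N.label E lam0 ℓ hℓ v j ≤ N.label E' lam0' ℓ hℓ (ι v) j := by
  exact maxSumGNN_label_monotone_general N hN E E' lam0 lam0' hlam0' ι
    (fun _ _ => hι.injOn) hE hle
end

section
/- Let d be a natural number, let M be a d×d real matrix with non-negative entries, let t_f ∈ ℝ, and let w > 0, ε > 0, α > 0 be real numbers with α·w·ε ≥ t_f and such that every nonzero entry of M is at least w. Let h, h', t, t' ∈ ℝ^d satisfy 0 ≤ h'[i] ≤ h[i] and 0 ≤ t'[j] ≤ t[j] for all i, j, such that every nonzero coordinate of h' and every nonzero coordinate of t' is at least ε, and such that for every i either h[i] = h'[i] or h'[i] ≥ α, and for every j either t[j] = t'[j] or t'[j] ≥ α. Then hᵀ M t ≥ t_f if and only if h'ᵀ M t' ≥ t_f. -/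
/-!
A product `h i * M i j * t j` can change under truncation only if it is nonzero and one of `h' i`,
`t' j` has reached the capacity `α`. The other factor is then at least `ε` and the matrix entry at
least `w`, so the truncated product alone is at least `α * w * ε` and already meets the threshold.
-/

section Sum

variable {ι R : Type*} [AddCommMonoid R] [PartialOrder R] [IsOrderedAddMonoid R]

theorem le_sum_iff_le_sum_of_eq_or_le {s : Finset ι} {f g : ι → R} {c : R}
    (hg : ∀ i ∈ s, 0 ≤ g i) (hgf : ∀ i ∈ s, g i ≤ f i) (heq : ∀ i ∈ s, f i = g i ∨ c ≤ g i) :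
    c ≤ ∑ i ∈ s, f i ↔ c ≤ ∑ i ∈ s, g i := by
  refine ⟨fun hf => ?_, fun h => h.trans (Finset.sum_le_sum hgf)⟩
  by_cases hc : ∃ i ∈ s, c ≤ g i
  · obtain ⟨i, hi, hci⟩ := hc
    exact hci.trans (Finset.single_le_sum hg hi)
  · have hfg : ∀ i ∈ s, f i = g i := fun i hi =>
      (heq i hi).resolve_right fun hci => hc ⟨i, hi, hci⟩
    rwa [Finset.sum_congr rfl hfg] at hf

end Sum

theorem nonneg_of_ne_zero_imp_le {R : Type*} [Zero R] [Preorder R] {x c : R}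
    (hc : 0 ≤ c) (hx : x ≠ 0 → c ≤ x) : 0 ≤ x := by
  by_cases hx0 : x = 0
  · exact hx0.ge
  · exact hc.trans (hx hx0)

section Bilinear

variable {R : Type*} [CommSemiring R] [PartialOrder R] [IsOrderedRing R] {w ε α : R}

theorem mul_mul_eq_or_capacity_le {a a' m b b' : R} (hw : 0 ≤ w) (hε : 0 ≤ ε) (hα : 0 < α)
    (hm : m ≠ 0 → w ≤ m) (haε : a' ≠ 0 → ε ≤ a') (hbε : b' ≠ 0 → ε ≤ b')
    (haα : a = a' ∨ α ≤ a') (hbα : b = b' ∨ α ≤ b') :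
    a * m * b = a' * m * b' ∨ α * w * ε ≤ a' * m * b' := by
  refine or_iff_not_imp_left.mpr fun hne => ?_
  have hm0 : m ≠ 0 := by
    rintro rfl
    simp at hne
  have ha0 : a' ≠ 0 := by
    rintro rfl
    have ha : a = 0 := haα.resolve_right hα.not_ge
    simp [ha] at hne
  have hb0 : b' ≠ 0 := by
    rintro rfl
    have hb : b = 0 := hbα.resolve_right hα.not_ge
    simp [hb] at hne
  have hwm : w ≤ m := hm hm0
  have ha : 0 ≤ a' := hε.trans (haε ha0)
  have hm_nonneg : 0 ≤ m := hw.trans hwm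
  have hcap : α ≤ a' ∨ α ≤ b' := by
    by_contra! hlt
    exact hne (by rw [haα.resolve_right hlt.1, hbα.resolve_right hlt.2])
  rcases hcap with ha_cap | hb_cap
  · have hεb : ε ≤ b' := hbε hb0
    gcongr
  · have hεa : ε ≤ a' := haε ha0
    calc α * w * ε = ε * w * α := by ring
      _ ≤ a' * m * b' := by gcongr

theorem bilinear_score_threshold_iff_of_capacity_general {m n : Type*} [Fintype m] [Fintype n]
    {M : Matrix m n R} {tf : R} (hw : 0 ≤ w) (hε : 0 ≤ ε) (hα : 0 < α)
    (hcap : tf ≤ α * w * ε) (hMw : ∀ i j, M i j ≠ 0 → w ≤ M i j)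
    {h h' : m → R} {t t' : n → R} (hh : ∀ i, h' i ≤ h i) (ht : ∀ j, t' j ≤ t j)
    (hhε : ∀ i, h' i ≠ 0 → ε ≤ h' i) (htε : ∀ j, t' j ≠ 0 → ε ≤ t' j)
    (hhα : ∀ i, h i = h' i ∨ α ≤ h' i) (htα : ∀ j, t j = t' j ∨ α ≤ t' j) :
    tf ≤ ∑ i, ∑ j, h i * M i j * t j ↔ tf ≤ ∑ i, ∑ j, h' i * M i j * t' j := by
  have hM_nonneg i j : 0 ≤ M i j := nonneg_of_ne_zero_imp_le hw (hMw i j)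
  have hh'_nonneg i : 0 ≤ h' i := nonneg_of_ne_zero_imp_le hε (hhε i)
  have ht'_nonneg j : 0 ≤ t' j := nonneg_of_ne_zero_imp_le hε (htε j)
  simp only [← Fintype.sum_prod_type']
  refine le_sum_iff_le_sum_of_eq_or_le ?nonneg ?le ?eq_or_le <;> rintro ⟨i, j⟩ -
  case nonneg =>
    exact mul_nonneg (mul_nonneg (hh'_nonneg i) (hM_nonneg i j)) (ht'_nonneg j)
  case le =>
    exact mul_le_mul (mul_le_mul_of_nonneg_right (hh i) (hM_nonneg i j)) (ht j) (ht'_nonneg j)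
      (mul_nonneg ((hh'_nonneg i).trans (hh i)) (hM_nonneg i j))
  case eq_or_le =>
    exact (mul_mul_eq_or_capacity_le hw hε hα (hMw i j) (hhε i) (htε j) (hhα i) (htα j)).imp_right
      hcap.trans

end Bilinear

/-- decoding-level content of the capacity theorem: with `w` a
lower bound on the nonzero entries of `M`, `ε` a lower bound on the nonzero
coordinates of `h'` and `t'`, and `α` the capacity bound with `α·w·ε ≥ t_f`,
the bilinear scores `hᵀ M t` and `h'ᵀ M t'` are above the threshold `t_f`
simultaneously. -/
theorem bilinear_score_threshold_iff_of_capacity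
    (d : ℕ) (M : Matrix (Fin d) (Fin d) ℝ) (hM : ∀ i j, 0 ≤ M i j)
    (tf w ε α : ℝ) (hw : 0 < w) (hε : 0 < ε) (hα : 0 < α)
    (hcap : tf ≤ α * w * ε)
    (hMw : ∀ i j, M i j ≠ 0 → w ≤ M i j)
    (h h' t t' : Fin d → ℝ)
    (hh : ∀ i, 0 ≤ h' i ∧ h' i ≤ h i)
    (ht : ∀ j, 0 ≤ t' j ∧ t' j ≤ t j)
    (hhε : ∀ i, h' i ≠ 0 → ε ≤ h' i)
    (htε : ∀ j, t' j ≠ 0 → ε ≤ t' j)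
    (hhα : ∀ i, h i = h' i ∨ α ≤ h' i)
    (htα : ∀ j, t j = t' j ∨ α ≤ t' j) :
    (tf ≤ ∑ i, ∑ j, h i * M i j * t j ↔ tf ≤ ∑ i, ∑ j, h' i * M i j * t' j) :=
  bilinear_score_threshold_iff_of_capacity_general hw.le hε.le hα hcap hMw
    (fun i => (hh i).2) (fun j => (ht j).2) hhε htε hhα htα
end
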